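/- Let k_1 < k_2 < ... < k_n be positive integers and let K be the n×n matrix with (i,j) entry (k_i + k_j)^(k_i + k_j). Then for every real r > 0, the entrywise power K^{∘r} (with (i,j) entry (k_i + k_j)^{(k_i + k_j)r}) is strictly totally positive. -/

import Mathlib

/-!
Let `ψ s = s log s`, so that the entries are `exp (r ψ (kᵢ + kⱼ))`. The Cauchy kernel `1 / (x + y)`
is positive definite. Integrating twice, from infinity, on weights of sum zero (for which affine
terms in `x + y` are invisible) shows that `ψ (x + y)` is strictly conditionally positive definite,
so by Schoenberg's argument `exp (r ψ (x + y))` is strictly positive definite. Nodes in arithmetic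
progression make every minor with consecutive rows and consecutive columns the determinant of such a
positive definite Hankel matrix, and Fekete's criterion extends positivity to all minors.
-/

open Filter Finset Matrix Topology

/-! ### Fekete's criterion -/

section Fekete

variable {R : Type*} [CommRing R] {𝕜 : Type*} [Field 𝕜]

lemma det_of_sum_rows {m α : Type*} [Fintype m] [DecidableEq m] (A : Matrix α m R)
    (s : m → Finset α) :
    (Matrix.of fun p q => ∑ t ∈ s p, A t q).det =
      ∑ τ ∈ Fintype.piFinset s, (A.submatrix τ id).det := by
  have hrows : (Matrix.of fun p q => ∑ t ∈ s p, A t q) = fun p => ∑ t ∈ s p, A t := by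
    ext p q
    exact (Finset.sum_apply q (s p) fun t => A t).symm
  rw [hrows]
  exact Matrix.detRowAlternating.toMultilinearMap.map_sum_finset (fun _ t => A t) s

lemma det_eq_prod_mul_det_sub_pred {l : ℕ} (M : Matrix (Fin (l + 1)) (Fin (l + 1)) 𝕜)
    (hM : ∀ p, M p 0 ≠ 0) :
    M.det = (∏ p, M p 0) * (Matrix.of fun p q : Fin l =>
      M p.succ q.succ / M p.succ 0 - M p.castSucc q.succ / M p.castSucc 0).det := by
  let N : Matrix (Fin (l + 1)) (Fin (l + 1)) 𝕜 := .of fun p q => M p q / M p 0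
  let B : Matrix (Fin (l + 1)) (Fin (l + 1)) 𝕜 :=
    .of fun p q => Fin.cases (N 0 q) (fun p' => N p'.succ q - N p'.castSucc q) p
  have hMN : M = .of fun p q => M p 0 * N p q := by
    ext p q
    simp [N, mul_div_cancel₀ _ (hM p)]
  have hNB : N.det = B.det :=
    Matrix.det_eq_of_forall_row_eq_smul_add_pred (fun _ => 1) (by simp [B]) (by simp [B])
  have hB : ∀ p : Fin l, B p.succ 0 = 0 := fun p => by simp [B, N, hM]
  have hB₀ : B 0 0 = 1 := by simp [B, N, hM]
  conv_lhs => rw [hMN, Matrix.det_mul_column, hNB, Matrix.det_succ_column_zero, Fin.sum_univ_succ]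
  simp only [hB, hB₀, mul_zero, zero_mul, sum_const_zero, add_zero, Fin.val_zero, pow_zero, one_mul]
  rfl

/-- The elimination step behind Fekete's criterion: each row of `A` is divided by its first entry,
consecutive rows are subtracted, and the first column, which becomes zero, is dropped. -/
def rowDiff {l : ℕ} (A : Matrix ℕ (Fin (l + 1)) 𝕜) : Matrix ℕ (Fin l) 𝕜 :=
  .of fun t q => A (t + 1) q.succ / A (t + 1) 0 - A t q.succ / A t 0

lemma det_submatrix_eq_prod_mul_det_sum_rowDiff {l : ℕ} (A : Matrix ℕ (Fin (l + 1)) 𝕜)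
    (hA : ∀ t, A t 0 ≠ 0) {i : Fin (l + 1) → ℕ} (hi : Monotone i) :
    (A.submatrix i id).det = (∏ p, A (i p) 0) *
      (Matrix.of fun p q => ∑ t ∈ Ico (i p.castSucc) (i p.succ), rowDiff A t q).det := by
  refine (det_eq_prod_mul_det_sub_pred (A.submatrix i id) fun p => hA (i p)).trans ?_
  congr 2
  ext p q
  exact (sum_Ico_sub (fun t => A t q.succ / A t 0) (hi p.castSucc_le_succ)).symm

variable [LinearOrder 𝕜] [IsStrictOrderedRing 𝕜]

lemma det_submatrix_rowDiff_pos {l : ℕ} (A : Matrix ℕ (Fin (l + 1)) 𝕜) (hA : ∀ t, 0 < A t 0)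
    {a : ℕ} (hdet : 0 < (A.submatrix (fun p : Fin (l + 1) => a + p) id).det) :
    0 < ((rowDiff A).submatrix (fun p : Fin l => a + p) id).det := by
  rw [det_submatrix_eq_prod_mul_det_sum_rowDiff A (fun t => (hA t).ne')
    fun p q h => Nat.add_le_add_left h a] at hdet
  convert pos_of_mul_pos_right hdet (prod_nonneg fun p _ => (hA _).le) using 2
  ext p q
  simp [← add_assoc]

lemma det_submatrix_pos_of_consecutive_rows {m : ℕ} (A : Matrix ℕ (Fin m) 𝕜)
    (hA : ∀ (l : ℕ) (hl : l ≤ m) (a : ℕ),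
      0 < (A.submatrix (fun p : Fin l => a + p) (Fin.castLE hl)).det)
    {i : Fin m → ℕ} (hi : StrictMono i) : 0 < (A.submatrix i id).det := by
  induction m with
  | zero => simp
  | succ m ih =>
    have hA₀ (t : ℕ) : 0 < A t 0 := by simpa using! hA 1 (by omega) t
    have hdiff (l : ℕ) (hl : l ≤ m) (a : ℕ) :
        0 < ((rowDiff A).submatrix (fun p : Fin l => a + p) (Fin.castLE hl)).det :=
      det_submatrix_rowDiff_pos (A.submatrix id (Fin.castLE (Nat.succ_le_succ hl))) hA₀
        (hA (l + 1) (Nat.succ_le_succ hl) a)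
    rw [det_submatrix_eq_prod_mul_det_sum_rowDiff A (fun t => (hA₀ t).ne') hi.monotone,
      det_of_sum_rows]
    refine mul_pos (prod_pos fun p _ => hA₀ _)
      (sum_pos (fun τ hτ => ih _ hdiff fun p q hpq => ?_) ?_)
    · simp only [Fintype.mem_piFinset, mem_Ico] at hτ
      calc τ p < i p.succ := (hτ p).2
        _ ≤ i q.castSucc := hi.monotone (Fin.succ_le_castSucc_iff.2 hpq)
        _ ≤ τ q := (hτ q).1
    · exact Fintype.piFinset_nonempty.2 fun p => nonempty_Ico.2 (hi p.castSucc_lt_succ)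

lemma det_submatrix_pos_of_consecutive (K : Matrix ℕ ℕ 𝕜)
    (hK : ∀ l a b : ℕ,
      0 < (K.submatrix (fun p : Fin l => a + p) (fun q : Fin l => b + q)).det)
    {m : ℕ} {i j : Fin m → ℕ} (hi : StrictMono i) (hj : StrictMono j) :
    0 < (K.submatrix i j).det := by
  have hrows {l : ℕ} {i : Fin l → ℕ} (hi : StrictMono i) (b : ℕ) :
      0 < (K.submatrix i (fun q : Fin l => b + q)).det :=
    det_submatrix_pos_of_consecutive_rows (K.submatrix id fun q : Fin l => b + q)
      (fun l' _ a => hK l' a b) hi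
  rw [← Matrix.det_transpose]
  refine det_submatrix_pos_of_consecutive_rows (K.submatrix i id)ᵀ (fun l hl b => ?_) hj
  rw [← Matrix.det_transpose]
  exact hrows (hi.comp (Fin.strictMono_castLE hl)) b

end Fekete

/-! ### The quadratic forms of sum kernels -/

lemma lt_of_strictMonoOn_Ici_of_tendsto {α β : Type*} [LinearOrder α] [NoMaxOrder α]
    [TopologicalSpace β] [Preorder β] [ClosedIciTopology β] {f : α → β} {a : α} {b : β}
    (hf : StrictMonoOn f (Set.Ici a)) (hlim : Tendsto f atTop (𝓝 b)) : f a < b := by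
  obtain ⟨c, hac⟩ := exists_gt a
  have : Nonempty α := ⟨a⟩
  refine (hf Set.self_mem_Ici hac.le hac).trans_le (ge_of_tendsto hlim ?_)
  filter_upwards [eventually_ge_atTop c] with t hct
  exact hf.monotoneOn hac.le (hac.le.trans hct) hct

lemma sum_sum_mul_mul_inv_add_pos {ι 𝕜 : Type*} [Field 𝕜] [LinearOrder 𝕜]
    [IsStrictOrderedRing 𝕜] {x : ι → 𝕜} (hx : Function.Injective x) (hpos : ∀ i, 0 < x i)
    (s : Finset ι) (c : ι → 𝕜) (hc : ∃ i ∈ s, c i ≠ 0) :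
    0 < ∑ i ∈ s, ∑ j ∈ s, c i * c j * (x i + x j)⁻¹ := by
  classical
  induction s using Finset.induction_on generalizing c with
  | empty => simp at hc
  | insert a s ha ih =>
    -- Eliminating the node `x a` leaves a Cauchy form again, with rescaled weights `d`.
    let d (i : ι) := c i * (x i - x a) / (x i + x a)
    have hne (i j : ι) : x i + x j ≠ 0 := (add_pos (hpos i) (hpos j)).ne'
    have hterm (i j : ι) : c i * c j * (x i + x j)⁻¹ =
        d i * d j * (x i + x j)⁻¹ + 2 * x a * (c i / (x i + x a) * (c j / (x j + x a))) := by
      have := hne i j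
      have := hne i a
      have := hne j a
      simp only [d]
      field_simp
      ring
    have hda : d a = 0 := by simp [d]
    have hsplit : ∑ i ∈ insert a s, ∑ j ∈ insert a s, c i * c j * (x i + x j)⁻¹ =
        ∑ i ∈ s, ∑ j ∈ s, d i * d j * (x i + x j)⁻¹ +
          2 * x a * (∑ i ∈ insert a s, c i / (x i + x a)) ^ 2 := by
      simp only [hterm, sum_add_distrib, ← mul_sum, sq, sum_mul_sum]
      simp [sum_insert ha, hda]
    have hxa := hpos a
    rw [hsplit]
    by_cases hs : ∃ i ∈ s, c i ≠ 0
    · obtain ⟨i, hi, hci⟩ := hs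
      have hdi : d i ≠ 0 := div_ne_zero
        (mul_ne_zero hci (sub_ne_zero.2 (hx.ne (ne_of_mem_of_not_mem hi ha)))) (hne i a)
      have := ih d ⟨i, hi, hdi⟩
      positivity
    · push Not at hs
      have hca : c a ≠ 0 := by
        obtain ⟨i, hi, hci⟩ := hc
        rcases mem_insert.1 hi with rfl | hi
        exacts [hci, absurd (hs i hi) hci]
      have hsum : ∑ i ∈ insert a s, c i / (x i + x a) = c a / (x a + x a) := by
        rw [sum_insert ha, sum_eq_zero fun i hi => by simp [hs i hi], add_zero]
      have hform : ∑ i ∈ s, ∑ j ∈ s, d i * d j * (x i + x j)⁻¹ = 0 :=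
        sum_eq_zero fun i hi => sum_eq_zero fun j _ => by simp [d, hs i hi]
      rw [hsum, hform, zero_add]
      positivity

section HankelForm

variable {ι : Type*} [Fintype ι] {x c : ι → ℝ} {φ φ' : ℝ → ℝ}

/-- The quadratic form, at the weights `c`, of the Hankel kernel `(s, t) ↦ φ (s + t)` restricted to
the nodes `x`. -/
def hankelForm (φ : ℝ → ℝ) (x c : ι → ℝ) : ℝ := ∑ i, ∑ j, c i * c j * φ (x i + x j)

lemma hankelForm_neg (φ : ℝ → ℝ) (x c : ι → ℝ) :
    hankelForm (fun s => -φ s) x c = -hankelForm φ x c := by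
  simp [hankelForm]

lemma hankelForm_add_affine (hc : ∑ i, c i = 0) (φ : ℝ → ℝ) (x : ι → ℝ) (a b : ℝ) :
    hankelForm (fun s => φ s + (a + b * s)) x c = hankelForm φ x c := by
  have hsplit (i j : ι) : c i * c j * (φ (x i + x j) + (a + b * (x i + x j))) =
      c i * c j * φ (x i + x j) + c i * (a + b * x i) * c j + c i * (c j * (b * x j)) := by ring
  simp only [hankelForm, hsplit, sum_add_distrib, ← mul_sum, ← sum_mul, hc]
  simp

lemma hankelForm_inv_pos (hx : Function.Injective x) (hpos : ∀ i, 0 < x i) (hc : c ≠ 0) :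
    0 < hankelForm (·⁻¹) x c :=
  sum_sum_mul_mul_inv_add_pos hx hpos univ c (by simpa using Function.ne_iff.1 hc)

lemma hasDerivAt_hankelForm_add (hpos : ∀ i, 0 < x i)
    (hφ : ∀ s, 0 < s → HasDerivAt φ (φ' s) s) {t : ℝ} (ht : 0 ≤ t) :
    HasDerivAt (fun t => hankelForm φ (fun i => x i + t) c)
      (2 * hankelForm φ' (fun i => x i + t) c) t := by
  simp only [hankelForm, mul_sum]
  refine .fun_sum fun i _ => .fun_sum fun j _ => ?_
  have hsum : HasDerivAt (fun t => x i + t + (x j + t)) (1 + 1) t :=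
    ((hasDerivAt_id t).const_add _).add ((hasDerivAt_id t).const_add _)
  have hs : 0 < x i + t + (x j + t) := by linarith [hpos i, hpos j]
  convert! ((hφ _ hs).comp t hsum).const_mul (c i * c j) using 1
  ring

lemma tendsto_hankelForm_add_zero (hpos : ∀ i, 0 < x i) (hc : ∑ i, c i = 0) {a b : ℝ → ℝ}
    (hφ : ∀ s, 0 < s → Tendsto (fun t => φ (t + s) + (a t + b t * (t + s))) atTop (𝓝 0)) :
    Tendsto (fun t => hankelForm φ (fun i => x i + t) c) atTop (𝓝 0) := by
  have hcorrected : Tendsto (fun t => hankelForm (fun s => φ s + (a (2 * t) + b (2 * t) * s))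
      (fun i => x i + t) c) atTop (𝓝 (∑ i, ∑ j, c i * c j * 0)) := by
    refine tendsto_finsetSum _ fun i _ => tendsto_finsetSum _ fun j _ => .const_mul _ ?_
    convert! (hφ _ (add_pos (hpos i) (hpos j))).comp
      (tendsto_id.const_mul_atTop (zero_lt_two (α := ℝ))) using 2 with t
    simp only [Function.comp_apply, id, show x i + t + (x j + t) = 2 * t + (x i + x j) by ring]
  simpa [hankelForm_add_affine hc] using hcorrected

lemma hankelForm_neg_of_hasDerivAt (hpos : ∀ i, 0 < x i) (hc : ∑ i, c i = 0)
    (hderiv : ∀ s, 0 < s → HasDerivAt φ (φ' s) s)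
    (hφ' : ∀ t, 0 < t → 0 < hankelForm φ' (fun i => x i + t) c) {a b : ℝ → ℝ}
    (hlim : ∀ s, 0 < s → Tendsto (fun t => φ (t + s) + (a t + b t * (t + s))) atTop (𝓝 0)) :
    hankelForm φ x c < 0 := by
  have hF {t : ℝ} (ht : 0 ≤ t) := hasDerivAt_hankelForm_add (c := c) hpos hderiv ht
  have hmono : StrictMonoOn (fun t => hankelForm φ (fun i => x i + t) c) (Set.Ici 0) := by
    refine strictMonoOn_of_deriv_pos (convex_Ici 0)
      (fun t ht => (hF ht).continuousAt.continuousWithinAt) fun t ht => ?_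
    rw [interior_Ici] at ht
    rw [(hF (le_of_lt ht)).deriv]
    exact mul_pos two_pos (hφ' t ht)
  simpa using lt_of_strictMonoOn_Ici_of_tendsto hmono (tendsto_hankelForm_add_zero hpos hc hlim)

lemma hankelForm_log_neg (hx : Function.Injective x) (hpos : ∀ i, 0 < x i) (hc : c ≠ 0)
    (hsum : ∑ i, c i = 0) : hankelForm Real.log x c < 0 := by
  refine hankelForm_neg_of_hasDerivAt (φ' := (·⁻¹)) (a := fun t => -Real.log t) (b := 0) hpos hsum
    (fun s hs => Real.hasDerivAt_log hs.ne') (fun t ht => ?_) fun s _ => ?_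
  · exact hankelForm_inv_pos ((add_left_injective t).comp hx) (fun i => add_pos (hpos i) ht) hc
  · simpa [sub_eq_add_neg] using Real.tendsto_log_comp_add_sub_log s

lemma tendsto_add_mul_log_add_sub_log (s : ℝ) :
    Tendsto (fun t => (t + s) * (Real.log (t + s) - Real.log t)) atTop (𝓝 s) := by
  have hmain := (Real.tendsto_mul_log_one_add_div_atTop s).add
    ((Real.tendsto_log_comp_add_sub_log s).const_mul s)
  rw [mul_zero, add_zero] at hmain
  refine hmain.congr' ?_
  filter_upwards [eventually_gt_atTop 0, eventually_gt_atTop (-s)] with t ht hts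
  have hts' : t + s ≠ 0 := by linarith
  rw [one_add_div ht.ne', Real.log_div hts' ht.ne']
  ring

lemma hankelForm_mul_log_pos (hx : Function.Injective x) (hpos : ∀ i, 0 < x i) (hc : c ≠ 0)
    (hsum : ∑ i, c i = 0) : 0 < hankelForm (fun s => s * Real.log s) x c := by
  suffices h : hankelForm Real.negMulLog x c < 0 by
    rwa [Real.negMulLog_eq_neg, hankelForm_neg, neg_lt_zero] at h
  -- For large `t`, `(t + s) log (t + s)` is `(t + s) (log t + 1) - t` up to `o(1)`.
  refine hankelForm_neg_of_hasDerivAt (φ' := fun s => -Real.log s - 1) (a := fun t => -t)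
    (b := fun t => Real.log t + 1) hpos hsum (fun s hs => Real.hasDerivAt_negMulLog hs.ne')
    (fun t ht => ?_) fun s _ => ?_
  · have hlog := hankelForm_log_neg ((add_left_injective t).comp hx)
      (fun i => add_pos (hpos i) ht) hc hsum
    rw [← neg_pos, ← hankelForm_neg, ← hankelForm_add_affine hsum _ _ (-1) 0] at hlog
    simpa [sub_eq_add_neg] using! hlog
  · convert! (tendsto_add_mul_log_add_sub_log s).const_sub s using 2
    · rw [Real.negMulLog]
      ring
    · ring

end HankelForm

/-! ### Entrywise exponentials -/

section Exp

variable {ι : Type*}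

lemma posSemidef_map_pow [Finite ι] {M : Matrix ι ι ℝ} (hM : M.PosSemidef) (k : ℕ) :
    (M.map (· ^ k)).PosSemidef := by
  induction k with
  | zero =>
    convert posSemidef_vecMulVec_self_star (1 : ι → ℝ)
    ext i j
    simp [vecMulVec_apply]
  | succ k ih =>
    have heq : M.map (· ^ (k + 1)) = M.map (· ^ k) ⊙ M := by
      ext i j
      simp [pow_succ]
    exact heq ▸ ih.hadamard hM

lemma posDef_map_exp [Finite ι] {M : Matrix ι ι ℝ} (hM : M.PosDef) :
    (M.map Real.exp).PosDef := by
  have := Fintype.ofFinite ι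
  refine .of_dotProduct_mulVec_pos (hM.isHermitian.map _ fun _ => rfl) fun v hv => ?_
  have hseries : HasSum (fun k : ℕ => (k.factorial : ℝ)⁻¹ * (star v ⬝ᵥ M.map (· ^ k) *ᵥ v))
      (star v ⬝ᵥ M.map Real.exp *ᵥ v) := by
    simp only [dot_mulVec_eq_sum_sum, mul_sum]
    refine hasSum_sum fun j _ => hasSum_sum fun i _ => ?_
    convert! ((NormedSpace.expSeries_div_hasSum_exp (M i j)).mul_left (star v i)).mul_right (v j)
      using 1
    · ext k
      simp only [map_apply]
      ring
    · simp [Real.exp_eq_exp_ℝ]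
  have hlinear := le_hasSum hseries 1 fun k _ =>
    mul_nonneg (by positivity) ((posSemidef_map_pow hM.posSemidef k).dotProduct_mulVec_nonneg v)
  refine (hM.dotProduct_mulVec_pos hv).trans_le ?_
  simpa using hlinear

variable [Fintype ι] {M : Matrix (Option ι) (Option ι) ℝ}

lemma posDef_centered_of_sum_zero (hsymm : M.IsSymm)
    (hM : ∀ c : Option ι → ℝ, c ≠ 0 → ∑ i, c i = 0 → 0 < c ⬝ᵥ M *ᵥ c) :
    (Matrix.of fun i j : ι =>
      M (some i) (some j) - M (some i) none - M none (some j) + M none none).PosDef := by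
  refine .of_dotProduct_mulVec_pos ?_ fun v hv => ?_
  · ext i j
    simp only [conjTranspose_apply, of_apply, star_trivial, hsymm.apply (some i) (some j),
      hsymm.apply none (some j), hsymm.apply (some i) none]
    ring
  · let c : Option ι → ℝ := fun o => o.elim (-∑ i, v i) v
    have hc : c ≠ 0 := fun h => hv (funext fun i => congrFun h (some i))
    refine (hM c hc (by simp [c, Fintype.sum_option])).trans_eq ?_
    have hterm (i j : ι) : v i * (M (some i) (some j) - M (some i) none - M none (some j) +
          M none none) * v j =
        v i * M (some i) (some j) * v j - v i * M (some i) none * v j -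
          v i * (M none (some j) * v j) + v i * (M none none * v j) := by ring
    rw [dot_mulVec_eq_sum_sum, dot_mulVec_eq_sum_sum]
    simp only [Fintype.sum_option, c, Option.elim, of_apply, star_trivial, hterm,
      sum_add_distrib, sum_sub_distrib, neg_mul, mul_neg, ← sum_mul, ← mul_sum]
    simp only [add_mul, neg_mul, mul_assoc (∑ i, v i), sum_add_distrib, sum_neg_distrib, ← mul_sum]
    ring

/-- Schoenberg's argument: centering a conditionally positive definite matrix at the extra index
`none` makes it positive definite and only rescales the rows and columns of its exponential. -/
lemma posDef_exp_of_sum_zero (hsymm : M.IsSymm)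
    (hM : ∀ c : Option ι → ℝ, c ≠ 0 → ∑ i, c i = 0 → 0 < c ⬝ᵥ M *ᵥ c) :
    ((M.submatrix some some).map Real.exp).PosDef := by
  classical
  let d (i : ι) := Real.exp (M (some i) none - M none none / 2)
  have hd : IsUnit (diagonal d) := by
    simp [isUnit_diagonal, Pi.isUnit_iff, d, Real.exp_ne_zero]
  convert! hd.posDef_star_right_conjugate_iff.2
    (posDef_map_exp (posDef_centered_of_sum_zero hsymm hM)) using 1
  ext i j
  simp only [star_eq_conjTranspose, diagonal_conjTranspose, mul_diagonal, diagonal_mul, map_apply,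
    submatrix_apply, of_apply, d, star_trivial, ← Real.exp_add,
    hsymm.apply none (some j)]
  congr 1
  ring

end Exp

lemma posDef_add_rpow {ι : Type*} [Finite ι] {r : ℝ} (hr : 0 < r) {x : ι → ℝ}
    (hx : Function.Injective x) (hpos : ∀ i, 0 < x i) :
    (Matrix.of fun i j => (x i + x j) ^ ((x i + x j) * r)).PosDef := by
  have := Fintype.ofFinite ι
  obtain ⟨y, hy₀, hy⟩ : ∃ y, 0 < y ∧ ∀ i, x i ≠ y := by
    obtain ⟨y, hy₀, hy⟩ := (Set.Ioi_infinite (0 : ℝ)).exists_notMem_finset (univ.image x)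
    exact ⟨y, hy₀, by simpa using hy⟩
  let z : Option ι → ℝ := fun o => o.elim y x
  have hz : Function.Injective z := Option.injective_iff.2 ⟨hx, by simpa [z] using hy⟩
  have hzpos : ∀ o, 0 < z o := Option.forall.2 ⟨hy₀, hpos⟩
  let M : Matrix (Option ι) (Option ι) ℝ :=
    .of fun o o' => r * ((z o + z o') * Real.log (z o + z o'))
  have hsymm : M.IsSymm := by
    ext o o'
    simp [M, add_comm]
  convert posDef_exp_of_sum_zero hsymm fun c hc hsum => ?_ using 1
  · ext i j
    simp only [of_apply, map_apply, submatrix_apply, M, z, Option.elim]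
    rw [Real.rpow_def_of_pos (add_pos (hpos i) (hpos j))]
    congr 1
    ring
  · have hform : c ⬝ᵥ M *ᵥ c = r * hankelForm (fun s => s * Real.log s) z c := by
      simp only [hankelForm, dotProduct, mulVec, mul_sum, M, of_apply]
      exact sum_congr rfl fun i _ => sum_congr rfl fun j _ => by ring
    rw [hform]
    exact mul_pos hr (hankelForm_mul_log_pos hz hzpos hc hsum)

/-! ### Total positivity at rational nodes -/

lemma det_of_add_pos_of_posDef {φ : ℝ → ℝ}
    (hφ : ∀ (l : ℕ) (x : Fin l → ℝ), Function.Injective x → (∀ i, 0 < x i) →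
      (Matrix.of fun i j => φ (x i + x j)).PosDef)
    {h : ℝ} (hh : 0 < h) {m : ℕ} {i j : Fin m → ℕ} (hi : StrictMono i) (hj : StrictMono j) :
    0 < (Matrix.of fun p q => φ (h * (i p + 1) + h * (j q + 1))).det := by
  refine det_submatrix_pos_of_consecutive
    (.of fun a b : ℕ => φ (h * (a + 1) + h * (b + 1))) (fun l a b => ?_) hi hj
  -- A Hankel matrix depends on the offsets `a` and `b` only through their mean.
  let x (p : Fin l) : ℝ := h * (p + ((a + b) / 2 + 1))
  have hx : Function.Injective x := fun p q hpq => by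
    simpa [x, hh.ne', Fin.val_inj] using hpq
  convert (hφ l x hx fun p => by positivity).det_pos using 2
  ext p q
  simp only [submatrix_apply, of_apply, x]
  push_cast
  ring_nf

lemma exists_eq_mul_natCast_add_one {ι : Type*} [Finite ι] {k : ι → ℚ} (hk : ∀ i, 0 < k i) :
    ∃ h : ℚ, 0 < h ∧ ∃ a : ι → ℕ, ∀ i, k i = h * (a i + 1) := by
  have := Fintype.ofFinite ι
  let D := ∏ i, (k i).den
  have hD : 0 < D := prod_pos fun i _ => (k i).den_pos
  have hmul (i : ι) : ∃ a : ℕ, k i * D = a + 1 := by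
    obtain ⟨e, he⟩ : (k i).den ∣ D := dvd_prod_of_mem _ (mem_univ i)
    have hprod : k i * D = ((k i).num.toNat * e : ℕ) := by
      have hnum : (((k i).num.toNat : ℤ) : ℚ) = (k i).num :=
        congrArg _ (Int.toNat_of_nonneg (Rat.num_pos.2 (hk i)).le)
      rw [he]
      push_cast
      rw [← mul_assoc, Rat.mul_den_eq_num, ← hnum, Int.cast_natCast]
    have hpos : 0 < (k i).num.toNat * e := by
      have : 0 < k i * D := mul_pos (hk i) (mod_cast hD)
      exact_mod_cast hprod ▸ this
    exact ⟨(k i).num.toNat * e - 1, by rw [hprod, ← Nat.cast_add_one, Nat.sub_add_cancel hpos]⟩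
  choose a ha using hmul
  refine ⟨(D : ℚ)⁻¹, by positivity, a, fun i => ?_⟩
  rw [← ha]
  field_simp

theorem stmt_14_general (n : ℕ) (k : Fin n → ℚ) (hpos : ∀ i, 0 < k i) (hmono : StrictMono k)
    (r : ℝ) (hr : 0 < r)
    (m : ℕ) (f g : Fin m → Fin n) (hf : StrictMono f) (hg : StrictMono g) :
    0 < ((Matrix.of fun i j : Fin n =>
        ((k i + k j : ℚ) : ℝ) ^ (((k i + k j : ℚ) : ℝ) * r)).submatrix f g).det := by
  obtain ⟨h, hh, a, ha⟩ := exists_eq_mul_natCast_add_one hpos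
  have hamono : StrictMono a := fun i j hij => by
    simpa [ha, hh] using hmono hij
  convert det_of_add_pos_of_posDef (φ := fun s => s ^ (s * r))
    (fun l x hx hx₀ => posDef_add_rpow hr hx hx₀) (Rat.cast_pos.2 hh)
    (hamono.comp hf) (hamono.comp hg) using 2
  ext p q
  simp [ha]

/-- For positive integers `k₁ < … < kₙ` and real `r > 0`, the entrywise power
`K^{∘r}` of `K = [(kᵢ + kⱼ)^(kᵢ + kⱼ)]` is strictly totally positive. -/
theorem stmt_14 (n : ℕ) (k : Fin n → ℕ) (hpos : ∀ i, 0 < k i) (hmono : StrictMono k)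
    (r : ℝ) (hr : 0 < r)
    (m : ℕ) (f g : Fin m → Fin n) (hf : StrictMono f) (hg : StrictMono g) :
    0 < ((Matrix.of fun i j : Fin n =>
        ((k i + k j : ℕ) : ℝ) ^ (((k i + k j : ℕ) : ℝ) * r)).submatrix f g).det := by
  simpa using stmt_14_general n (fun i => k i) (by simpa using hpos)
    (Nat.strictMono_cast.comp hmono) r hr m f g hf hg
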